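/- Let b ≥ 2 be an integer, s ∈ ℕ, let a = (a_j)_{j=1}^s ∈ ℝ^s be nondecreasing, and set a'_j = max(a_j, 0). Then for all n ∈ ℕ one has e(n, s, W_{s,a}) ≥ b^{ −(log n)²/(2 s (log b)²) − (3s/2 + ∑_{j=1}^s a'_j)·(log n)/(s·log b) − ( s + ∑_{j=1}^s a'_j ) }. -/

import Mathlib

open MeasureTheory Matrix Filter
open scoped ENNReal BigOperators Topology

noncomputable section

/-- The `b`-adic digit of `k : ℕ` at place `b^i` (i.e. the `(i+1)`-st digit). -/
def natDigit (b k i : ℕ) : ℕ := k / b ^ i % b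

/-- The `(i+1)`-st `b`-adic digit of a real number `x ∈ [0,1)`
(using the expansion in which infinitely many digits differ from `b-1`). -/
def realDigit (b : ℕ) (x : ℝ) (i : ℕ) : ℕ := (⌊x * (b : ℝ) ^ (i + 1)⌋ % (b : ℤ)).toNat

/-- The `k`-th one-dimensional `b`-adic Walsh function. -/
def wal1 (b k : ℕ) (x : ℝ) : ℂ :=
  Complex.exp (2 * Real.pi * Complex.I / (b : ℂ) *
    ((∑ i ∈ Finset.range k, natDigit b k i * realDigit b x i : ℕ) : ℂ))

/-- The `k`-th `s`-dimensional `b`-adic Walsh function. -/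
def wal (b : ℕ) {s : ℕ} (k : Fin s → ℕ) (x : Fin s → ℝ) : ℂ :=
  ∏ j, wal1 b (k j) (x j)

/-- The unit cube `[0,1)^s`. -/
def unitCube (s : ℕ) : Set (Fin s → ℝ) := Set.univ.pi fun _ => Set.Ico (0 : ℝ) 1

/-- The `k`-th Walsh coefficient of `f`. -/
def walshCoeff (b : ℕ) {s : ℕ} (f : (Fin s → ℝ) → ℝ) (k : Fin s → ℕ) : ℂ :=
  ∫ x in unitCube s, (f x : ℂ) * (starRingEnd ℂ) (wal b k x)

/-- The generalized Dick weight `μ_a(k)`, one-dimensional case. -/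
def dickWt (b : ℕ) (a : ℝ) (k : ℕ) : ℝ :=
  ∑ i ∈ Finset.range k, if natDigit b k i ≠ 0 then ((i : ℝ) + 1 + a) else 0

/-- The generalized Dick weight `μ_a(k)` for vectors. -/
def dickWtV (b : ℕ) {s : ℕ} (a : Fin s → ℝ) (k : Fin s → ℕ) : ℝ :=
  ∑ j, dickWt b (a j) (k j)

/-- The modified Dick weight `μ'_a(k)`, one-dimensional case. -/
def mdickWt (b : ℕ) (a : ℝ) (k : ℕ) : ℝ :=
  ∑ i ∈ Finset.range k, if natDigit b k i ≠ 0 then max ((i : ℝ) + 1 + a) 1 else 0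

/-- The modified Dick weight `μ'_a(k)` for vectors. -/
def mdickWtV (b : ℕ) {s : ℕ} (a : Fin s → ℝ) (k : Fin s → ℕ) : ℝ :=
  ∑ j, mdickWt b (a j) (k j)

/-- Digitwise subtraction modulo `b` of natural numbers. -/
def dsub (b k k' : ℕ) : ℕ :=
  ∑ i ∈ Finset.range (k + k' + 1), ((natDigit b k i + (b - natDigit b k' i)) % b) * b ^ i

/-- The integral of `f` over the unit cube. -/
def intBox (s : ℕ) (f : (Fin s → ℝ) → ℝ) : ℝ := ∫ x in unitCube s, f x

/-- Membership in the Walsh space `W_{s,a}`: `f` equals its (convergent) Walsh series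
and has finite norm. -/
def MemW (b : ℕ) {s : ℕ} (a : Fin s → ℝ) (f : (Fin s → ℝ) → ℝ) : Prop :=
  (∀ x ∈ unitCube s, HasSum (fun k : Fin s → ℕ => walshCoeff b f k * wal b k x) ((f x : ℂ))) ∧
  BddAbove (Set.range fun k : Fin s → ℕ => ‖walshCoeff b f k‖ * (b : ℝ) ^ dickWtV b a k)

/-- The norm of the Walsh space `W_{s,a}`. -/
def normW (b : ℕ) {s : ℕ} (a : Fin s → ℝ) (f : (Fin s → ℝ) → ℝ) : ℝ :=
  ⨆ k : Fin s → ℕ, ‖walshCoeff b f k‖ * (b : ℝ) ^ dickWtV b a k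

/-- Membership in the modified Walsh space `W'_{s,a}`. -/
def MemW' (b : ℕ) {s : ℕ} (a : Fin s → ℝ) (f : (Fin s → ℝ) → ℝ) : Prop :=
  (∀ x ∈ unitCube s, HasSum (fun k : Fin s → ℕ => walshCoeff b f k * wal b k x) ((f x : ℂ))) ∧
  BddAbove (Set.range fun k : Fin s → ℕ => ‖walshCoeff b f k‖ * (b : ℝ) ^ mdickWtV b a k)

/-- The norm of the modified Walsh space `W'_{s,a}`. -/
def normW' (b : ℕ) {s : ℕ} (a : Fin s → ℝ) (f : (Fin s → ℝ) → ℝ) : ℝ :=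
  ⨆ k : Fin s → ℕ, ‖walshCoeff b f k‖ * (b : ℝ) ^ mdickWtV b a k

/-- The worst-case error of the algorithm `A` over the unit ball of `(H, N)`. -/
def worstErr (s : ℕ) (H : Set ((Fin s → ℝ) → ℝ)) (N : ((Fin s → ℝ) → ℝ) → ℝ)
    (A : ((Fin s → ℝ) → ℝ) → ℝ) : ℝ≥0∞ :=
  ⨆ (f : (Fin s → ℝ) → ℝ) (_ : f ∈ H) (_ : N f ≤ 1), ENNReal.ofReal |intBox s f - A f|

/-- The `n`-th minimal worst-case error over all algorithms using `n` function values
at points of the unit cube. -/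
def minErr (n s : ℕ) (H : Set ((Fin s → ℝ) → ℝ)) (N : ((Fin s → ℝ) → ℝ) → ℝ) : ℝ≥0∞ :=
  ⨅ (t : Fin n → Fin s → ℝ) (_ : ∀ i, t i ∈ unitCube s) (φ : (Fin n → ℝ) → ℝ),
    worstErr s H N fun f => φ fun i => f (t i)

/-- Partial derivative in the `j`-th coordinate. -/
def pd {s : ℕ} (j : Fin s) (f : (Fin s → ℝ) → ℝ) : (Fin s → ℝ) → ℝ :=
  fun x => deriv (fun t => f (Function.update x j t)) (x j)

/-- The mixed partial derivative `f^{(α)}`. -/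
def mpd {s : ℕ} (α : Fin s → ℕ) (f : (Fin s → ℝ) → ℝ) : (Fin s → ℝ) → ℝ :=
  (List.finRange s).foldr (fun j g => (pd j)^[α j] g) f

/-- Membership in the space `S_{s,u}` of smooth functions. -/
def MemS {s : ℕ} (u : Fin s → ℝ) (f : (Fin s → ℝ) → ℝ) : Prop :=
  ContDiff ℝ (⊤ : ℕ∞) f ∧
  BddAbove (Set.range fun α : Fin s → ℕ =>
    (∫ x in unitCube s, |mpd α f x|) / ∏ j, u j ^ α j)

/-- The norm of the space `S_{s,u}`. -/
def normS {s : ℕ} (u : Fin s → ℝ) (f : (Fin s → ℝ) → ℝ) : ℝ :=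
  ⨆ α : Fin s → ℕ, (∫ x in unitCube s, |mpd α f x|) / ∏ j, u j ^ α j

/-- The column vector of the first `m` `b`-adic digits of `k`. -/
def trunc (b m k : ℕ) : Fin m → ZMod b := fun i => (natDigit b k (i : ℕ) : ZMod b)

/-- The `m`-th point of the digital net determined by generating matrices `G`. -/
def netPoint (b : ℕ) {s l d : ℕ} (G : Fin s → Matrix (Fin l) (Fin d) (ZMod b)) (m : ℕ) :
    Fin s → ℝ :=
  fun j => ∑ i : Fin l, (((G j).mulVec (trunc b d m)) i).val / (b : ℝ) ^ ((i : ℕ) + 1)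

/-- The dual net of the digital net determined by `G`. -/
def dualNet (b : ℕ) {s l d : ℕ} (G : Fin s → Matrix (Fin l) (Fin d) (ZMod b)) :
    Set (Fin s → ℕ) :=
  {k | ∑ j, (G j)ᵀ.mulVec (trunc b l (k j)) = 0}

/-- The QMC algorithm given by the digital net with generating matrices `G`. -/
def qmcNet (b : ℕ) {s l d : ℕ} (G : Fin s → Matrix (Fin l) (Fin d) (ZMod b))
    (f : (Fin s → ℝ) → ℝ) : ℝ :=
  ((b : ℝ) ^ d)⁻¹ * ∑ m ∈ Finset.range (b ^ d), f (netPoint b G m)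

/-- `n_j = #{i ∈ ℕ : i + a ≤ 1}` (with `i` ranging over positive integers). -/
def negCount (a : ℝ) : ℕ := Set.ncard {i : ℕ | 0 < i ∧ (i : ℝ) + a ≤ 1}

/-!
Split the cube into `b ^ (s * m)` congruent `b`-adic boxes, where `m` is least with
`n < b ^ (s * m)`, so that `m ≤ log n / (s * log b) + 1`. One box contains no sample point, so the
algorithm returns the same value on `f` and `-f` for every multiple `f` of its indicator function.
Up to scaling this indicator is a product of Walsh–Dirichlet kernels
`∑ k < b ^ m, wal_k(x) * conj (wal_k(y))`: its nonzero Walsh coefficients have modulus one and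
index below `b ^ m` in each coordinate, where the Dick weight is at most
`∑ j, (m * (m + 1) / 2 + m * max (a j) 0)`.

The kernel identity and the orthonormality of the Walsh functions are the column and row
orthogonality of one matrix: on the `p`-th interval of length `b ^ (-N)` the functions `wal_k`,
`k < b ^ N`, take values `discreteWalsh b N k p` that are symmetric in `k` and `p`.
-/

section Digits

variable {b N k l : ℕ}

lemma natDigit_lt (hb : 0 < b) (k i : ℕ) : natDigit b k i < b :=
  Nat.mod_lt _ hb

lemma natDigit_eq_zero_of_lt_pow {i : ℕ} (hb : 0 < b) (hk : k < b ^ N) (hi : N ≤ i) :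
    natDigit b k i = 0 := by
  rw [natDigit, Nat.div_eq_of_lt (hk.trans_le (Nat.pow_le_pow_right hb hi)), Nat.zero_mod]

lemma sum_range_eq_of_natDigit {M : Type*} [AddCommMonoid M] {u : ℕ → M} (hb : 1 < b)
    (hk : k < b ^ N) (hu : ∀ i, natDigit b k i = 0 → u i = 0) :
    ∑ i ∈ Finset.range k, u i = ∑ i ∈ Finset.range N, u i := by
  have vanish {n : ℕ} (hn : k < b ^ n) : ∀ i ≥ n, u i = 0 := fun i hi =>
    hu i (natDigit_eq_zero_of_lt_pow hb.le hn hi)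
  rcases le_total k N with h | h
  · exact (Finset.eventually_constant_sum (vanish (Nat.lt_pow_self hb)) h).symm
  · exact Finset.eventually_constant_sum (vanish hk) h

lemma natDigit_ext (hk : k < b ^ N) (hl : l < b ^ N)
    (h : ∀ i < N, natDigit b k i = natDigit b l i) : k = l := by
  suffices finFunctionFinEquiv.symm (⟨k, hk⟩ : Fin (b ^ N)) = finFunctionFinEquiv.symm ⟨l, hl⟩ from
    congrArg Fin.val (finFunctionFinEquiv.symm.injective this)
  funext i
  exact Fin.ext (h i i.isLt)

lemma sum_prod_natDigit {R : Type*} [CommSemiring R] (b N : ℕ) (u : ℕ → ℕ → R) :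
    ∑ k ∈ Finset.range (b ^ N), ∏ i ∈ Finset.range N, u i (natDigit b k i) =
      ∏ i ∈ Finset.range N, ∑ d ∈ Finset.range b, u i d := by
  simp only [Finset.sum_range, Finset.prod_range]
  rw [Fintype.prod_sum, ← finFunctionFinEquiv.symm.sum_comp]
  rfl

lemma realDigit_eq_natDigit_floor {x : ℝ} {i : ℕ} (hb : 0 < b) (hx : 0 ≤ x) (hi : i < N) :
    realDigit b x i = natDigit b ⌊x * (b : ℝ) ^ N⌋₊ (N - 1 - i) := by
  have scale : x * (b : ℝ) ^ (i + 1) = x * (b : ℝ) ^ N / ((b ^ (N - 1 - i) : ℕ) : ℝ) := by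
    have pow_split : (b : ℝ) ^ N = (b : ℝ) ^ (i + 1) * (b : ℝ) ^ (N - 1 - i) := by
      rw [← pow_add, show i + 1 + (N - 1 - i) = N by omega]
    rw [pow_split, Nat.cast_pow, ← mul_assoc, mul_div_cancel_right₀ _ (by positivity)]
  have floor_scale : ⌊x * (b : ℝ) ^ (i + 1)⌋₊ = ⌊x * (b : ℝ) ^ N⌋₊ / b ^ (N - 1 - i) := by
    rw [scale, Nat.floor_div_natCast]
  rw [natDigit, ← floor_scale, realDigit, ← Int.natCast_floor_eq_floor (by positivity)]
  norm_cast

lemma measurable_realDigit (b i : ℕ) : Measurable fun x => realDigit b x i :=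
  (measurable_from_top (f := fun z : ℤ => (z % b).toNat)).comp
    (Int.measurable_floor.comp (measurable_id.mul_const _))

end Digits

section DiscreteWalsh

variable {b N p q : ℕ}

/-- The root of unity `ω_b = exp(2πi/b)` whose powers are the values of the Walsh functions. -/
def walshRoot (b : ℕ) : ℂ := Complex.exp (2 * Real.pi * Complex.I / b)

lemma isPrimitiveRoot_walshRoot (hb : b ≠ 0) : IsPrimitiveRoot (walshRoot b) b :=
  Complex.isPrimitiveRoot_exp b hb

lemma sum_pow_mul_conj_pow_of_isPrimitiveRoot {ζ : ℂ} (hζ : IsPrimitiveRoot ζ b)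
    (hp : p < b) (hq : q < b) :
    ∑ d ∈ Finset.range b, ζ ^ (d * p) * starRingEnd ℂ (ζ ^ (d * q)) =
      if p = q then (b : ℂ) else 0 := by
  have hb : b ≠ 0 := by omega
  have conj_ζ : starRingEnd ℂ ζ = ζ⁻¹ := (Complex.inv_eq_conj (hζ.norm'_eq_one hb)).symm
  have ζ_ne_zero : ζ ≠ 0 := hζ.ne_zero hb
  have term_eq (d : ℕ) : ζ ^ (d * p) * starRingEnd ℂ (ζ ^ (d * q)) = (ζ ^ p / ζ ^ q) ^ d := by
    rw [map_pow, conj_ζ, inv_pow, ← div_eq_mul_inv, mul_comm d p, mul_comm d q, pow_mul, pow_mul,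
      div_pow]
  simp only [term_eq]
  split_ifs with h
  · simp [h, ζ_ne_zero]
  · have ratio_ne_one : ζ ^ p / ζ ^ q ≠ 1 := fun h1 =>
      h (hζ.pow_inj hp hq ((div_eq_one_iff_eq (pow_ne_zero q ζ_ne_zero)).1 h1))
    have ratio_pow : (ζ ^ p / ζ ^ q) ^ b = 1 := by
      rw [div_pow, pow_right_comm ζ p, pow_right_comm ζ q, hζ.pow_eq_one, one_pow, one_pow, div_one]
    rw [geom_sum_eq ratio_ne_one, ratio_pow, sub_self, zero_div]

/-- The value of the `k`-th Walsh function on the interval `[p / b ^ N, (p + 1) / b ^ N)`, for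
`k, p < b ^ N`. The index `N - 1 - i` reverses the digits of `p`, as the leading digit of the real
number `p / b ^ N` is the top digit of `p`. -/
def discreteWalsh (b N k p : ℕ) : ℂ :=
  ∏ i ∈ Finset.range N, walshRoot b ^ (natDigit b k i * natDigit b p (N - 1 - i))

lemma discreteWalsh_comm (b N k p : ℕ) : discreteWalsh b N k p = discreteWalsh b N p k := by
  rw [discreteWalsh, ← Finset.prod_range_reflect]
  refine Finset.prod_congr rfl fun i hi => ?_
  rw [Nat.sub_sub_self (Nat.le_sub_one_of_lt (Finset.mem_range.1 hi)), mul_comm]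

lemma discreteWalsh_zero_left (b N p : ℕ) : discreteWalsh b N 0 p = 1 := by
  simp [discreteWalsh, natDigit]

lemma norm_discreteWalsh (hb : b ≠ 0) (N k p : ℕ) : ‖discreteWalsh b N k p‖ = 1 := by
  simp [discreteWalsh, (isPrimitiveRoot_walshRoot hb).norm'_eq_one hb]

lemma sum_discreteWalsh_mul_conj (hb : 0 < b) (hp : p < b ^ N) (hq : q < b ^ N) :
    ∑ k ∈ Finset.range (b ^ N), discreteWalsh b N k p * starRingEnd ℂ (discreteWalsh b N k q) =
      if p = q then (b : ℂ) ^ N else 0 := by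
  have digits_eq_iff : (∀ i ∈ Finset.range N, natDigit b p i = natDigit b q i) ↔ p = q :=
    ⟨fun h => natDigit_ext hp hq fun i hi => h i (Finset.mem_range.2 hi), fun h _ _ => by rw [h]⟩
  calc
    _ = ∏ i ∈ Finset.range N, ∑ d ∈ Finset.range b,
          walshRoot b ^ (d * natDigit b p (N - 1 - i)) *
            starRingEnd ℂ (walshRoot b ^ (d * natDigit b q (N - 1 - i))) := by
      simp only [discreteWalsh, map_prod, ← Finset.prod_mul_distrib]
      exact sum_prod_natDigit b N fun i d => walshRoot b ^ (d * natDigit b p (N - 1 - i)) *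
        starRingEnd ℂ (walshRoot b ^ (d * natDigit b q (N - 1 - i)))
    _ = ∏ i ∈ Finset.range N,
          if natDigit b p (N - 1 - i) = natDigit b q (N - 1 - i) then (b : ℂ) else 0 :=
      Finset.prod_congr rfl fun i _ => sum_pow_mul_conj_pow_of_isPrimitiveRoot
        (isPrimitiveRoot_walshRoot hb.ne') (natDigit_lt hb p _) (natDigit_lt hb q _)
    _ = ∏ i ∈ Finset.range N, if natDigit b p i = natDigit b q i then (b : ℂ) else 0 :=
      Finset.prod_range_reflect
        (fun i => if natDigit b p i = natDigit b q i then (b : ℂ) else 0) N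
    _ = _ := by
      simp only [Finset.prod_ite_zero, digits_eq_iff, Finset.prod_const, Finset.card_range]

end DiscreteWalsh

section WalshFunctions

variable {b s : ℕ}

lemma wal1_eq_walshRoot_pow (b k : ℕ) (x : ℝ) :
    wal1 b k x = walshRoot b ^ ∑ i ∈ Finset.range k, natDigit b k i * realDigit b x i := by
  rw [wal1, mul_comm, Complex.exp_nat_mul, walshRoot]

lemma wal1_eq_discreteWalsh {N k : ℕ} {x : ℝ} (hb : 1 < b) (hk : k < b ^ N) (hx : 0 ≤ x) :
    wal1 b k x = discreteWalsh b N k ⌊x * (b : ℝ) ^ N⌋₊ := by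
  have exponent : ∑ i ∈ Finset.range k, natDigit b k i * realDigit b x i =
      ∑ i ∈ Finset.range N, natDigit b k i * natDigit b ⌊x * (b : ℝ) ^ N⌋₊ (N - 1 - i) := by
    rw [sum_range_eq_of_natDigit hb hk fun i hi => by rw [hi, zero_mul]]
    refine Finset.sum_congr rfl fun i hi => ?_
    rw [realDigit_eq_natDigit_floor hb.le hx (Finset.mem_range.1 hi)]
  rw [wal1_eq_walshRoot_pow, exponent, discreteWalsh, Finset.prod_pow_eq_pow_sum]

lemma setIntegral_Ico_floor_mul {E : Type*} [NormedAddCommGroup E] [NormedSpace ℝ E]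
    [CompleteSpace E] {M : ℕ} (hM : M ≠ 0) (F : ℕ → E) :
    ∫ x in Set.Ico (0 : ℝ) 1, F ⌊x * M⌋₊ = (M : ℝ)⁻¹ • ∑ p ∈ Finset.range M, F p := by
  have floor_eq (p : ℕ) : Set.EqOn (fun y : ℝ => F ⌊y⌋₊) (fun _ => F p) (Set.Ioo p (p + 1)) :=
    fun y hy => congrArg F (Nat.floor_eq_on_Ico p y ⟨hy.1.le, hy.2⟩)
  have integral_cell (p : ℕ) : ∫ y in (p : ℝ)..(p + 1 : ℕ), F ⌊y⌋₊ = F p := by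
    push_cast
    rw [intervalIntegral.integral_congr_Ioo_of_le (by simp) (floor_eq p)]
    simp
  have integrable_cell (p : ℕ) :
      IntervalIntegrable (fun y : ℝ => F ⌊y⌋₊) volume p (p + 1 : ℕ) := by
    push_cast
    rw [intervalIntegrable_iff_integrableOn_Ioo_of_le (by simp),
      integrableOn_congr_fun (floor_eq p) measurableSet_Ioo]
    simp
  rw [integral_Ico_eq_integral_Ioc, ← intervalIntegral.integral_of_le zero_le_one,
    intervalIntegral.integral_comp_mul_right (fun y => F ⌊y⌋₊) (Nat.cast_ne_zero.2 hM), zero_mul,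
    one_mul, ← Nat.cast_zero,
    ← intervalIntegral.sum_integral_adjacent_intervals fun p _ => integrable_cell p]
  simp only [integral_cell]

lemma setIntegral_Ico_wal1_mul_conj_wal1 (hb : 1 < b) (k l : ℕ) :
    ∫ x in Set.Ico (0 : ℝ) 1, wal1 b k x * starRingEnd ℂ (wal1 b l x) =
      if k = l then 1 else 0 := by
  obtain ⟨N, hk, hl⟩ : ∃ N, k < b ^ N ∧ l < b ^ N :=
    ⟨max k l, (le_max_left k l).trans_lt (Nat.lt_pow_self hb),
      (le_max_right k l).trans_lt (Nat.lt_pow_self hb)⟩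
  have pow_ne_zero : b ^ N ≠ 0 := by positivity
  calc
    _ = ∫ x in Set.Ico (0 : ℝ) 1, discreteWalsh b N k ⌊x * (b ^ N : ℕ)⌋₊ *
          starRingEnd ℂ (discreteWalsh b N l ⌊x * (b ^ N : ℕ)⌋₊) := by
      refine setIntegral_congr_fun measurableSet_Ico fun x hx => ?_
      simp only [wal1_eq_discreteWalsh hb hk hx.1, wal1_eq_discreteWalsh hb hl hx.1, Nat.cast_pow]
    _ = ((b ^ N : ℕ) : ℝ)⁻¹ • ∑ p ∈ Finset.range (b ^ N),
          discreteWalsh b N p k * starRingEnd ℂ (discreteWalsh b N p l) := by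
      rw [setIntegral_Ico_floor_mul pow_ne_zero fun p =>
        discreteWalsh b N k p * starRingEnd ℂ (discreteWalsh b N l p)]
      simp only [discreteWalsh_comm b N k, discreteWalsh_comm b N l]
    _ = _ := by
      rw [sum_discreteWalsh_mul_conj hb.le hk hl]
      split_ifs
      · simp [show b ≠ 0 by omega]
      · simp

lemma measurable_wal1 (b k : ℕ) : Measurable (wal1 b k) := by
  have exponent_measurable :
      Measurable fun x => ∑ i ∈ Finset.range k, natDigit b k i * realDigit b x i :=
    Finset.measurable_fun_sum _ fun i _ => (measurable_realDigit b i).const_mul _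
  rw [funext (wal1_eq_walshRoot_pow b k)]
  exact (measurable_from_top (f := fun n : ℕ => walshRoot b ^ n)).comp exponent_measurable

lemma norm_wal1 (hb : b ≠ 0) (k : ℕ) (x : ℝ) : ‖wal1 b k x‖ = 1 := by
  rw [wal1_eq_walshRoot_pow, norm_pow, (isPrimitiveRoot_walshRoot hb).norm'_eq_one hb, one_pow]

lemma wal_zero (b : ℕ) (x : Fin s → ℝ) : wal b 0 x = 1 := by
  simp [wal, wal1]

lemma measurable_wal (b : ℕ) (k : Fin s → ℕ) : Measurable (wal b k) :=
  Finset.measurable_fun_prod _ fun j _ => (measurable_wal1 b (k j)).comp (measurable_pi_apply j)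

lemma norm_wal (hb : b ≠ 0) (k : Fin s → ℕ) (x : Fin s → ℝ) : ‖wal b k x‖ = 1 := by
  simp [wal, norm_wal1 hb]

lemma measurableSet_unitCube (s : ℕ) : MeasurableSet (unitCube s) :=
  MeasurableSet.univ_pi fun _ => measurableSet_Ico

lemma volume_restrict_unitCube (s : ℕ) :
    volume.restrict (unitCube s) = Measure.pi fun _ => volume.restrict (Set.Ico (0 : ℝ) 1) := by
  rw [unitCube, volume_pi, Measure.restrict_pi_pi]

lemma integrableOn_wal_mul_conj_wal (hb : b ≠ 0) (k l : Fin s → ℕ) :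
    IntegrableOn (fun x => wal b k x * starRingEnd ℂ (wal b l x)) (unitCube s) := by
  have : IsFiniteMeasure (volume.restrict (unitCube s)) := by
    rw [volume_restrict_unitCube]
    infer_instance
  have measurable_product : Measurable fun x => wal b k x * starRingEnd ℂ (wal b l x) :=
    (measurable_wal b k).mul (Complex.continuous_conj.measurable.comp (measurable_wal b l))
  exact Integrable.of_bound measurable_product.aestronglyMeasurable 1
    (.of_forall fun x => by simp [norm_wal hb])

theorem setIntegral_unitCube_wal_mul_conj_wal (hb : 1 < b) (k l : Fin s → ℕ) :
    ∫ x in unitCube s, wal b k x * starRingEnd ℂ (wal b l x) = if k = l then 1 else 0 := by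
  simp only [wal, map_prod, ← Finset.prod_mul_distrib]
  rw [volume_restrict_unitCube, integral_fintype_prod_eq_prod
    fun j x => wal1 b (k j) x * starRingEnd ℂ (wal1 b (l j) x)]
  simp only [setIntegral_Ico_wal1_mul_conj_wal1 hb, Fintype.prod_ite_zero, Finset.prod_const_one,
    funext_iff]

end WalshFunctions

section WalshSpace

variable {b s : ℕ} {a : Fin s → ℝ} {f : (Fin s → ℝ) → ℝ}

lemma walshCoeff_zero (b : ℕ) (f : (Fin s → ℝ) → ℝ) : walshCoeff b f 0 = intBox s f := by
  simp only [walshCoeff, wal_zero, map_one, mul_one, intBox, integral_complex_ofReal]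

lemma walshCoeff_neg (b : ℕ) (f : (Fin s → ℝ) → ℝ) (k : Fin s → ℕ) :
    walshCoeff b (-f) k = -walshCoeff b f k := by
  simp only [walshCoeff, Pi.neg_apply, Complex.ofReal_neg, neg_mul, integral_neg]

lemma normW_neg (b : ℕ) (a : Fin s → ℝ) (f : (Fin s → ℝ) → ℝ) :
    normW b a (-f) = normW b a f := by
  simp only [normW, walshCoeff_neg, norm_neg]

lemma memW_neg (hf : MemW b a f) : MemW b a (-f) := by
  refine ⟨fun x hx => ?_, ?_⟩
  · simpa only [walshCoeff_neg, neg_mul, Pi.neg_apply, Complex.ofReal_neg] using (hf.1 x hx).neg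
  · simpa only [walshCoeff_neg, norm_neg] using hf.2

section WalshPolynomial

variable {K : Finset (Fin s → ℕ)} {c : (Fin s → ℕ) → ℂ}

lemma walshCoeff_eq_of_eq_sum (hb : 1 < b)
    (hf : ∀ x ∈ unitCube s, (f x : ℂ) = ∑ k ∈ K, c k * wal b k x) (l : Fin s → ℕ) :
    walshCoeff b f l = if l ∈ K then c l else 0 := by
  calc
    _ = ∫ x in unitCube s, ∑ k ∈ K, c k * (wal b k x * starRingEnd ℂ (wal b l x)) := by
      refine setIntegral_congr_fun (measurableSet_unitCube s) fun x hx => ?_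
      simp only [hf x hx, Finset.sum_mul, mul_assoc]
    _ = ∑ k ∈ K, c k * ∫ x in unitCube s, wal b k x * starRingEnd ℂ (wal b l x) := by
      rw [integral_finsetSum _ fun k _ =>
        (integrableOn_wal_mul_conj_wal (by omega) k l).const_mul (c k)]
      simp only [integral_const_mul]
    _ = _ := by simp [setIntegral_unitCube_wal_mul_conj_wal hb]

lemma norm_walshCoeff_mul_rpow_le_of_eq_sum {B : ℝ} (hb : 1 < b)
    (hf : ∀ x ∈ unitCube s, (f x : ℂ) = ∑ k ∈ K, c k * wal b k x) (hB : 0 ≤ B)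
    (hc : ∀ k ∈ K, ‖c k‖ * (b : ℝ) ^ dickWtV b a k ≤ B) (k : Fin s → ℕ) :
    ‖walshCoeff b f k‖ * (b : ℝ) ^ dickWtV b a k ≤ B := by
  rw [walshCoeff_eq_of_eq_sum hb hf]
  split_ifs with hk
  · exact hc k hk
  · simpa using hB

lemma normW_le_of_eq_sum {B : ℝ} (hb : 1 < b)
    (hf : ∀ x ∈ unitCube s, (f x : ℂ) = ∑ k ∈ K, c k * wal b k x) (hB : 0 ≤ B)
    (hc : ∀ k ∈ K, ‖c k‖ * (b : ℝ) ^ dickWtV b a k ≤ B) : normW b a f ≤ B :=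
  ciSup_le (norm_walshCoeff_mul_rpow_le_of_eq_sum hb hf hB hc)

lemma memW_of_eq_sum (hb : 1 < b)
    (hf : ∀ x ∈ unitCube s, (f x : ℂ) = ∑ k ∈ K, c k * wal b k x) : MemW b a f := by
  refine ⟨fun x hx => ?_, ?_⟩
  · have coeff_eq : ∀ k ∈ K, c k * wal b k x = walshCoeff b f k * wal b k x := fun k hk => by
      rw [walshCoeff_eq_of_eq_sum hb hf, if_pos hk]
    rw [hf x hx, Finset.sum_congr rfl coeff_eq]
    exact hasSum_sum_of_ne_finset_zero fun k hk => by
      rw [walshCoeff_eq_of_eq_sum hb hf, if_neg hk, zero_mul]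
  · refine ⟨∑ k ∈ K, ‖c k‖ * (b : ℝ) ^ dickWtV b a k, Set.forall_mem_range.2 ?_⟩
    have term_nonneg (k : Fin s → ℕ) : 0 ≤ ‖c k‖ * (b : ℝ) ^ dickWtV b a k := by positivity
    exact norm_walshCoeff_mul_rpow_le_of_eq_sum hb hf (Finset.sum_nonneg fun k _ => term_nonneg k)
      fun k hk => Finset.single_le_sum (fun k _ => term_nonneg k) hk

end WalshPolynomial

end WalshSpace

lemma le_minErr_of_forall_exists_vanishing {n s : ℕ} {H : Set ((Fin s → ℝ) → ℝ)}
    {ν : ((Fin s → ℝ) → ℝ) → ℝ} {ε : ℝ} (neg_mem : ∀ f ∈ H, -f ∈ H) (neg_eq : ∀ f, ν (-f) = ν f)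
    (exists_vanishing : ∀ t : Fin n → Fin s → ℝ, (∀ i, t i ∈ unitCube s) →
      ∃ f ∈ H, ν f ≤ 1 ∧ (∀ i, f (t i) = 0) ∧ ε ≤ intBox s f) :
    ENNReal.ofReal ε ≤ minErr n s H ν := by
  refine le_iInf fun t => le_iInf fun ht => le_iInf fun φ => ?_
  obtain ⟨f, hf, hν, hzero, hε⟩ := exists_vanishing t ht
  have le_worstErr {g : (Fin s → ℝ) → ℝ} (hg : g ∈ H) (hνg : ν g ≤ 1) (hg0 : ∀ i, g (t i) = 0)
      (hgε : ε ≤ |intBox s g - φ 0|) :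
      ENNReal.ofReal ε ≤ worstErr s H ν fun f => φ fun i => f (t i) := by
    refine le_iSup_of_le g (le_iSup_of_le hg (le_iSup_of_le hνg ?_))
    simp only [hg0]
    exact ENNReal.ofReal_le_ofReal hgε
  -- The algorithm outputs `φ 0` on both `f` and `-f`, whose integrals differ by at least `2 * ε`.
  rcases le_total (φ 0) 0 with hφ | hφ
  · exact le_worstErr hf hν hzero (le_abs.2 (.inl (by linarith)))
  · refine le_worstErr (neg_mem f hf) ((neg_eq f).trans_le hν) (by simpa using hzero)
      (le_abs.2 (.inr ?_))
    have intBox_neg : intBox s (-f) = -intBox s f := integral_neg f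
    linarith

section DickWeight

variable {b m : ℕ}

lemma dickWt_le_of_lt_pow {k : ℕ} (hb : 1 < b) (a : ℝ) (hk : k < b ^ m) :
    dickWt b a k ≤ m * (m + 1) / 2 + m * max a 0 := by
  have sum_add_one (n : ℕ) : ∑ i ∈ Finset.range n, ((i : ℝ) + 1) = n * (n + 1) / 2 := by
    induction n with
    | zero => simp
    | succ n ih => rw [Finset.sum_range_succ, ih]; push_cast; ring
  calc
    dickWt b a k = ∑ i ∈ Finset.range m, if natDigit b k i ≠ 0 then (i : ℝ) + 1 + a else 0 :=
      sum_range_eq_of_natDigit hb hk fun i hi => if_neg (not_not.2 hi)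
    _ ≤ ∑ i ∈ Finset.range m, ((i : ℝ) + 1 + max a 0) := by
      refine Finset.sum_le_sum fun i _ => ?_
      split_ifs
      · gcongr
        exact le_max_left a 0
      · positivity
    _ = _ := by
      rw [Finset.sum_add_distrib, sum_add_one, Finset.sum_const, Finset.card_range, nsmul_eq_mul]

lemma dickWtV_le_of_lt_pow {s : ℕ} {k : Fin s → ℕ} (hb : 1 < b) (a : Fin s → ℝ)
    (hk : ∀ j, k j < b ^ m) :
    dickWtV b a k ≤ s * (m * (m + 1) / 2) + m * ∑ j, max (a j) 0 :=
  calc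
    _ ≤ ∑ j, ((m : ℝ) * (m + 1) / 2 + m * max (a j) 0) :=
      Finset.sum_le_sum fun j _ => dickWt_le_of_lt_pow hb (a j) (hk j)
    _ = _ := by simp [Finset.sum_add_distrib, Finset.mul_sum]

end DickWeight

section BoxKernel

variable {b m s : ℕ} {q : Fin s → ℕ}

/-- On `[0,1)^s`, the indicator function of the elementary box
`∏ j, [q j / b ^ m, (q j + 1) / b ^ m)`, normalized to have integral `1`. It is the function that
fools an algorithm sampling outside the box. -/
def boxKernel (b m : ℕ) (q : Fin s → ℕ) (x : Fin s → ℝ) : ℝ :=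
  ∏ j, if ⌊x j * (b : ℝ) ^ m⌋₊ = q j then (b : ℝ) ^ m else 0

lemma boxKernel_eq_sum {x : Fin s → ℝ} (hb : 1 < b) (hq : ∀ j, q j < b ^ m)
    (hx : x ∈ unitCube s) :
    (boxKernel b m q x : ℂ) = ∑ k ∈ Fintype.piFinset fun _ => Finset.range (b ^ m),
      (∏ j, starRingEnd ℂ (discreteWalsh b m (k j) (q j))) * wal b k x := by
  have floor_lt (j : Fin s) : ⌊x j * (b : ℝ) ^ m⌋₊ < b ^ m := by
    have hxj : x j < 1 := (hx j (Set.mem_univ j)).2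
    rw [Nat.floor_lt' (by positivity), Nat.cast_pow]
    exact mul_lt_of_lt_one_left (by positivity) hxj
  have factor_eq (j : Fin s) :
      (if ⌊x j * (b : ℝ) ^ m⌋₊ = q j then (b : ℂ) ^ m else 0) = ∑ k ∈ Finset.range (b ^ m),
        starRingEnd ℂ (discreteWalsh b m k (q j)) * wal1 b k (x j) := by
    rw [← sum_discreteWalsh_mul_conj hb.le (floor_lt j) (hq j)]
    refine Finset.sum_congr rfl fun k hk => ?_
    rw [wal1_eq_discreteWalsh hb (Finset.mem_range.1 hk) (hx j (Set.mem_univ j)).1, mul_comm]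
  simp only [boxKernel, Complex.ofReal_prod, apply_ite, Complex.ofReal_pow, Complex.ofReal_natCast,
    Complex.ofReal_zero, factor_eq, Finset.prod_univ_sum, Finset.prod_mul_distrib, wal]

lemma intBox_boxKernel (hb : 1 < b) (hq : ∀ j, q j < b ^ m) : intBox s (boxKernel b m q) = 1 := by
  have coeff_zero := walshCoeff_eq_of_eq_sum hb (fun x => boxKernel_eq_sum hb hq) 0
  have zero_mem : (0 : Fin s → ℕ) ∈ Fintype.piFinset fun _ => Finset.range (b ^ m) := by
    simp [show 0 < b by omega]
  rw [walshCoeff_zero, if_pos zero_mem] at coeff_zero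
  simpa only [Pi.zero_apply, discreteWalsh_zero_left, map_one, Finset.prod_const_one,
    Complex.ofReal_eq_one] using coeff_zero

lemma exists_boxKernel_eq_zero {n : ℕ} (hn : n < b ^ (s * m)) (t : Fin n → Fin s → ℝ) :
    ∃ q : Fin s → ℕ, (∀ j, q j < b ^ m) ∧ ∀ i, boxKernel b m q (t i) = 0 := by
  let boxOf (i : Fin n) (j : Fin s) : ℕ := ⌊t i j * (b : ℝ) ^ m⌋₊
  have card_lt : (Finset.univ.image boxOf).card <
      (Fintype.piFinset fun _ : Fin s => Finset.range (b ^ m)).card :=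
    calc
      _ ≤ n := Finset.card_image_le.trans_eq (Finset.card_fin n)
      _ < b ^ (s * m) := hn
      _ = _ := by simp [← pow_mul, mul_comm]
  obtain ⟨q, hq, hempty⟩ := Finset.exists_mem_notMem_of_card_lt_card card_lt
  refine ⟨q, fun j => Finset.mem_range.1 (Fintype.mem_piFinset.1 hq j), fun i => ?_⟩
  have boxOf_ne : boxOf i ≠ q := fun h => hempty (Finset.mem_image.2 ⟨i, Finset.mem_univ i, h⟩)
  obtain ⟨j, hj⟩ := Function.ne_iff.1 boxOf_ne
  exact Finset.prod_eq_zero (Finset.mem_univ j) (if_neg hj)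

end BoxKernel

section LowerBound

variable {b m n s : ℕ}

theorem rpow_neg_le_minErr_of_lt_pow (hb : 1 < b) (a : Fin s → ℝ) (hn : n < b ^ (s * m)) :
    ENNReal.ofReal ((b : ℝ) ^ (-(s * (m * (m + 1) / 2) + m * ∑ j, max (a j) 0))) ≤
      minErr n s {f | MemW b a f} (normW b a) := by
  set w : ℝ := s * (m * (m + 1) / 2) + m * ∑ j, max (a j) 0
  have b_pos : (0 : ℝ) < b := by positivity
  refine le_minErr_of_forall_exists_vanishing (fun f => memW_neg) (normW_neg b a) fun t _ => ?_
  obtain ⟨q, hq, hzero⟩ := exists_boxKernel_eq_zero hn t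
  let f (x : Fin s → ℝ) : ℝ := (b : ℝ) ^ (-w) * boxKernel b m q x
  let c (k : Fin s → ℕ) : ℂ :=
    ((b : ℝ) ^ (-w) : ℝ) * ∏ j, starRingEnd ℂ (discreteWalsh b m (k j) (q j))
  let K : Finset (Fin s → ℕ) := Fintype.piFinset fun _ => Finset.range (b ^ m)
  have f_eq_sum : ∀ x ∈ unitCube s, (f x : ℂ) = ∑ k ∈ K, c k * wal b k x := fun x hx => by
    simp only [f, c, K, Complex.ofReal_mul, boxKernel_eq_sum hb hq hx, Finset.mul_sum, mul_assoc]
  have coeff_bound : ∀ k ∈ K, ‖c k‖ * (b : ℝ) ^ dickWtV b a k ≤ 1 := fun k hk => by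
    have norm_c : ‖c k‖ = (b : ℝ) ^ (-w) := by
      simp [c, norm_discreteWalsh (show b ≠ 0 by omega),
        abs_of_nonneg (Real.rpow_nonneg b_pos.le _)]
    have weight_le : dickWtV b a k ≤ w := dickWtV_le_of_lt_pow hb a fun j =>
      Finset.mem_range.1 (Fintype.mem_piFinset.1 hk j)
    rw [norm_c, ← Real.rpow_add b_pos]
    exact Real.rpow_le_one_of_one_le_of_nonpos (by exact_mod_cast hb.le) (by linarith)
  have intBox_f : intBox s f = (b : ℝ) ^ (-w) := by
    rw [intBox, integral_const_mul, ← intBox, intBox_boxKernel hb hq, mul_one]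
  exact ⟨f, memW_of_eq_sum hb f_eq_sum, normW_le_of_eq_sum hb f_eq_sum zero_le_one coeff_bound,
    fun i => by simp only [f, hzero, mul_zero], intBox_f.ge⟩

lemma exists_lt_pow_mul_and_le_log_div_add_one (hb : 1 < b) (hs : 0 < s) (hn : 0 < n) :
    ∃ m : ℕ, n < b ^ (s * m) ∧ (m : ℝ) ≤ Real.log n / (s * Real.log b) + 1 := by
  have log_b_pos : 0 < Real.log b := Real.log_pos (by exact_mod_cast hb)
  set L : ℝ := Real.log n / (s * Real.log b) with hL
  refine ⟨⌊L⌋₊ + 1, ?_, ?_⟩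
  · have log_lt : Real.log n < Real.log ((b : ℝ) ^ (s * (⌊L⌋₊ + 1))) := by
      have := Nat.lt_floor_add_one L
      rw [hL, div_lt_iff₀ (by positivity)] at this
      rw [Real.log_pow]
      push_cast
      linarith
    exact_mod_cast (Real.log_lt_log_iff (by positivity) (by positivity)).1 log_lt
  · push_cast
    gcongr
    exact Nat.floor_le (by positivity)

theorem statement7_general (hb : 2 ≤ b) (hs : 0 < s) (a : Fin s → ℝ) (hn : 0 < n) :
    ENNReal.ofReal
        ((b : ℝ) ^
          (-(Real.log n) ^ 2 / (2 * s * (Real.log b) ^ 2) -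
            (3 * s / 2 + ∑ j, max (a j) 0) * (Real.log n / (s * Real.log b)) -
            ((s : ℝ) + ∑ j, max (a j) 0))) ≤
      minErr n s {f | MemW b a f} (normW b a) := by
  obtain ⟨m, hnm, hm⟩ := exists_lt_pow_mul_and_le_log_div_add_one hb hs hn
  have log_b_pos : 0 < Real.log b := Real.log_pos (by exact_mod_cast hb)
  set L : ℝ := Real.log n / (s * Real.log b) with hL
  have quadratic_term : -(Real.log n) ^ 2 / (2 * s * (Real.log b) ^ 2) = -(s * L ^ 2 / 2) := by
    rw [hL]
    field_simp
  have weight_le : s * (m * (m + 1) / 2) + m * ∑ j, max (a j) 0 ≤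
      s * ((L + 1) * (L + 1 + 1) / 2) + (L + 1) * ∑ j, max (a j) 0 := by
    gcongr
  refine (ENNReal.ofReal_le_ofReal ?_).trans (rpow_neg_le_minErr_of_lt_pow hb a hnm)
  refine Real.rpow_le_rpow_of_exponent_le (by exact_mod_cast Nat.one_le_of_lt hb) ?_
  rw [quadratic_term]
  linarith

end LowerBound

/-- explicit lower bound for `e(n, s, W_{s,a})` with `a'_j = max(a_j, 0)`. -/
theorem statement7 (b : ℕ) (hb : 2 ≤ b) (s : ℕ) (hs : 0 < s)
    (a : ℕ → ℝ) (ha : Monotone a) :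
    ∀ n : ℕ, 0 < n →
      ENNReal.ofReal
          ((b : ℝ) ^
            (-(Real.log n) ^ 2 / (2 * s * (Real.log b) ^ 2) -
              (3 * s / 2 + ∑ j : Fin s, max (a j) 0) * (Real.log n / (s * Real.log b)) -
              ((s : ℝ) + ∑ j : Fin s, max (a j) 0))) ≤
        minErr n s {f | MemW b (fun j : Fin s => a j) f} (normW b (fun j : Fin s => a j)) := by
  exact fun n hn => statement7_general hb hs (fun j => a j) hn

end
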